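/- There exists a single transition matrix T ∈ 𝒯 such that, for every x ∈ X, the limit lim_{n→∞} h_T^n(x) exists in [0,+∞] and equals hup*(x), where hup* := lim_{n→∞} hup^n; that is, the upper expected hitting time of the imprecise Markov chain is attained by one homogeneous (precise) transition matrix compatible with 𝒯. -/

import Mathlib

open Filter Topology

variable {X : Type*}

/-- The application of a transition "matrix" `T` to an extended-real-valued
function `f`, `(Tf)(x) = ∑ y, T x y * f y`, with the convention `0 * ⊤ = 0`
(which is the convention of `EReal` multiplication). -/
noncomputable def matApply [Fintype X] (T : X → X → ℝ) (f : X → EReal) (x : X) : EReal :=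
  ∑ y, (T x y : EReal) * f y

/-- `T` is a transition matrix: nonnegative entries, rows summing to one. -/
def IsTransMat [Fintype X] (T : X → X → ℝ) : Prop :=
  (∀ x y, 0 ≤ T x y) ∧ ∀ x, ∑ y, T x y = 1

/-- `𝒯` has separately specified rows. -/
def HasSepRows [Fintype X] (𝒯 : Set (X → X → ℝ)) : Prop :=
  ∀ sel : X → X → X → ℝ, (∀ x, sel x ∈ 𝒯) → ∃ T ∈ 𝒯, ∀ x y, T x y = sel x x y

/-- The lower transition operator of `𝒯`. -/
noncomputable def lowerOp [Fintype X] (𝒯 : Set (X → X → ℝ)) (f : X → EReal) (x : X) : EReal :=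
  ⨅ T ∈ 𝒯, matApply T f x

/-- The upper transition operator of `𝒯`. -/
noncomputable def upperOp [Fintype X] (𝒯 : Set (X → X → ℝ)) (f : X → EReal) (x : X) : EReal :=
  ⨆ T ∈ 𝒯, matApply T f x

/-- The `{0,1}`-indicator of a set `B ⊆ X`, as an extended-real-valued function. -/
noncomputable def indE (B : Set X) : X → EReal := fun x => Set.indicator B 1 x

/-- The lower hitting-time iterates: `hlow⁰ = 1_{Aᶜ}`,
`hlowⁿ⁺¹ = 1_{Aᶜ} + 1_{Aᶜ} · (L hlowⁿ)`. -/
noncomputable def hlowIter [Fintype X] (𝒯 : Set (X → X → ℝ)) (A : Set X) : ℕ → X → EReal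
  | 0 => indE Aᶜ
  | n + 1 => fun x => indE Aᶜ x + indE Aᶜ x * lowerOp 𝒯 (hlowIter 𝒯 A n) x

/-- The upper hitting-time iterates: `hup⁰ = 1_{Aᶜ}`,
`hupⁿ⁺¹ = 1_{Aᶜ} + 1_{Aᶜ} · (U hupⁿ)`. -/
noncomputable def hupIter [Fintype X] (𝒯 : Set (X → X → ℝ)) (A : Set X) : ℕ → X → EReal
  | 0 => indE Aᶜ
  | n + 1 => fun x => indE Aᶜ x + indE Aᶜ x * upperOp 𝒯 (hupIter 𝒯 A n) x
/-- The hitting-time iterates for a single (precise) transition matrix `T`: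
`h_T⁰ = 1_{Aᶜ}`, `h_Tⁿ⁺¹ = 1_{Aᶜ} + 1_{Aᶜ} · (T h_Tⁿ)`; their pointwise limit is the
expected hitting time of `A` for the homogeneous Markov chain with transition matrix `T`. -/
noncomputable def hPrecIter [Fintype X] (T : X → X → ℝ) (A : Set X) : ℕ → X → EReal
  | 0 => indE Aᶜ
  | n + 1 => fun x => indE Aᶜ x + indE Aᶜ x * matApply T (hPrecIter T A n) x

open Classical in
noncomputable def bSeq [Fintype X] (A : Set X) (T : X → X → ℝ) : ℕ → X → ℝ
  | 0 => fun x => if x ∈ A then 0 else 1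
  | n + 1 => fun x => if x ∈ A then 0 else 1 + ∑ y, T x y * bSeq A T n y

open Classical in
noncomputable def aSeq [Fintype X] (A : Set X) (O : (X → ℝ) → X → X → ℝ) : ℕ → X → ℝ
  | 0 => fun x => if x ∈ A then 0 else 1
  | n + 1 => fun x => if x ∈ A then 0 else 1 + ∑ y, O (aSeq A O n) x y * aSeq A O n y

lemma matApply_coe [Fintype X] (T : X → X → ℝ) (f : X → ℝ) (x : X) :
    matApply T (fun y => (f y : EReal)) x = ((∑ y, T x y * f y : ℝ) : EReal) := by
  unfold matApply
  have : ∀ s : Finset X, ∑ y ∈ s, (T x y : EReal) * (f y : EReal)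
      = ((∑ y ∈ s, T x y * f y : ℝ) : EReal) := by
    classical
    intro s
    induction s using Finset.induction_on with
    | empty => simp
    | insert a s ha ih =>
      rw [Finset.sum_insert ha, Finset.sum_insert ha, ih, EReal.coe_add, EReal.coe_mul]
  exact this _

lemma hPrec_eq [Fintype X] (A : Set X) (T : X → X → ℝ) (n : ℕ) :
    hPrecIter T A n = fun x => (bSeq A T n x : EReal) := by
  induction n with
  | zero =>
    funext x
    by_cases h : x ∈ A <;> simp [hPrecIter, bSeq, indE, h]
  | succ n ih =>
    funext x
    by_cases h : x ∈ A <;> simp [hPrecIter, bSeq, indE, h, ih, matApply_coe]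

lemma hup_eq [Fintype X] (𝒯 : Set (X → X → ℝ)) (A : Set X) (O : (X → ℝ) → X → X → ℝ)
    (hO : ∀ f, O f ∈ 𝒯)
    (hopt : ∀ f, ∀ T ∈ 𝒯, ∀ x, ∑ y, T x y * f y ≤ ∑ y, O f x y * f y) (n : ℕ) :
    hupIter 𝒯 A n = fun x => (aSeq A O n x : EReal) := by
  have key : ∀ f : X → ℝ, ∀ x, upperOp 𝒯 (fun y => (f y : EReal)) x
      = ((∑ y, O f x y * f y : ℝ) : EReal) := by
    intro f x
    unfold upperOp
    apply le_antisymm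
    · refine iSup₂_le fun T hT => ?_
      rw [matApply_coe]
      exact EReal.coe_le_coe_iff.2 (hopt f T hT x)
    · rw [← matApply_coe]
      exact le_iSup₂ (f := fun T (_ : T ∈ 𝒯) => matApply T (fun y => (f y : EReal)) x) (O f) (hO f)
  induction n with
  | zero =>
    funext x
    by_cases h : x ∈ A <;> simp [hupIter, aSeq, indE, h]
  | succ n ih =>
    funext x
    by_cases h : x ∈ A <;> simp [hupIter, aSeq, indE, h, ih, key]

open Classical in
lemma seq_mono [Fintype X] (A : Set X) (Ts : ℕ → X → X → ℝ) (a : ℕ → X → ℝ)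
    (hT : ∀ n x y, 0 ≤ Ts n x y)
    (h0 : ∀ x, a 0 x = if x ∈ A then 0 else 1)
    (hs : ∀ n x, a (n+1) x = if x ∈ A then 0 else 1 + ∑ y, Ts n x y * a n y)
    (ho : ∀ n x, ∑ y, Ts n x y * a (n+1) y ≤ ∑ y, Ts (n+1) x y * a (n+1) y) :
    (∀ n x, 0 ≤ a n x) ∧ ∀ n x, a n x ≤ a (n+1) x := by
  have hn : ∀ n x, 0 ≤ a n x := by
    intro n
    induction n with
    | zero => intro x; rw [h0]; split_ifs <;> norm_num
    | succ n ih =>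
      intro x; rw [hs]; split_ifs
      · exact le_rfl
      · have := Finset.sum_nonneg (fun y (_ : y ∈ Finset.univ) => mul_nonneg (hT n x y) (ih y))
        linarith
  refine ⟨hn, ?_⟩
  intro n
  induction n with
  | zero =>
    intro x; rw [hs, h0]; split_ifs
    · exact le_rfl
    · have := Finset.sum_nonneg (fun y (_ : y ∈ Finset.univ) => mul_nonneg (hT 0 x y) (hn 0 y))
      linarith
  | succ n ih =>
    intro x; rw [hs (n+1), hs n]; split_ifs
    · exact le_rfl
    · have := Finset.sum_le_sum
        (fun y (_ : y ∈ Finset.univ) => mul_le_mul_of_nonneg_left (ih y) (hT n x y))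
      linarith [ho n x]

lemma exists_opt [Fintype X] (𝒯 : Set (X → X → ℝ)) (hc : IsCompact 𝒯) (hne : 𝒯.Nonempty)
    (hsep : HasSepRows 𝒯) (f : X → ℝ) :
    ∃ O ∈ 𝒯, ∀ T ∈ 𝒯, ∀ x, ∑ y, T x y * f y ≤ ∑ y, O x y * f y := by
  have h : ∀ x, ∃ O ∈ 𝒯, IsMaxOn (fun T : X → X → ℝ => ∑ y, T x y * f y) 𝒯 O := fun x =>
    hc.exists_isMaxOn hne (by fun_prop)
  choose sel hsel hmax using h
  obtain ⟨O, hO, hrow⟩ := hsep sel hsel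
  refine ⟨O, hO, fun T hT x => ?_⟩
  simp only [hrow]
  exact hmax x hT

/-- maximum principle -/
lemma max_pr [Fintype X] [Nonempty X] (𝒯 : Set (X → X → ℝ)) (hmem : ∀ T ∈ 𝒯, IsTransMat T)
    (B : Set X)
    (hK : ∀ K : Set X, K.Nonempty → (∀ x ∈ K, x ∉ B) →
      ∀ T ∈ 𝒯, (∀ x ∈ K, ∀ y, y ∉ K → T x y = 0) → False)
    (T : X → X → ℝ) (hT : T ∈ 𝒯) (v : X → ℝ) (hB : ∀ x ∈ B, v x ≤ 0)
    (hv : ∀ x, x ∉ B → v x ≤ ∑ y, T x y * v y) (x : X) : v x ≤ 0 := by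
  obtain ⟨m, hm⟩ := Finite.exists_max v
  by_contra hx
  have hpos : 0 < v m := lt_of_lt_of_le (not_le.1 hx) (hm x)
  refine hK {z | v z = v m} ⟨m, rfl⟩ ?_ T hT ?_
  · intro z hz hzB
    have := hB z hzB
    rw [Set.mem_ofPred_eq] at hz
    linarith
  · intro z hz y hy
    rw [Set.mem_ofPred_eq] at hz hy
    have hzB : z ∉ B := fun hzB => by have := hB z hzB; linarith
    have h1 := hv z hzB
    have h2 : ∑ y, T z y * (v m - v y) ≤ 0 := by
      simp only [mul_sub, Finset.sum_sub_distrib, ← Finset.sum_mul, (hmem T hT).2 z]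
      linarith
    have h3 : ∀ y ∈ Finset.univ, 0 ≤ T z y * (v m - v y) := fun y _ =>
      mul_nonneg ((hmem T hT).1 z y) (sub_nonneg.2 (hm y))
    have h4 := (Finset.sum_eq_zero_iff_of_nonneg h3).1 (le_antisymm h2 (Finset.sum_nonneg h3)) y
      (Finset.mem_univ _)
    rcases mul_eq_zero.1 h4 with h | h
    · exact h
    · exact absurd (by linarith) hy

/-- `G` is a set on which some choice of rows forces infinite hitting time. -/
def Bad [Fintype X] (𝒯 : Set (X → X → ℝ)) (A G : Set X) : Prop :=
  ∃ T ∈ 𝒯, ∀ T' ∈ 𝒯, (∀ x ∈ G, ∀ y, T' x y = T x y) →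
    ∀ x ∈ G, Tendsto (fun n => bSeq A T' n x) atTop atTop

open Classical in
lemma merge [Fintype X] (𝒯 : Set (X → X → ℝ)) (hsep : HasSepRows 𝒯) (G : Set X)
    (T₁ T₂ : X → X → ℝ) (h₁ : T₁ ∈ 𝒯) (h₂ : T₂ ∈ 𝒯) :
    ∃ T ∈ 𝒯, (∀ x ∈ G, ∀ y, T x y = T₁ x y) ∧ ∀ x, x ∉ G → ∀ y, T x y = T₂ x y := by
  obtain ⟨T, hT, h⟩ := hsep (fun x => if x ∈ G then T₁ else T₂)
    (fun x => by by_cases hx : x ∈ G <;> simp [hx, h₁, h₂])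
  refine ⟨T, hT, fun x hx y => by rw [h]; simp [hx], fun x hx y => by rw [h]; simp [hx]⟩

lemma b_props [Fintype X] (A : Set X) (T : X → X → ℝ) (hT : IsTransMat T) :
    (∀ n x, 0 ≤ bSeq A T n x) ∧ ∀ n x, bSeq A T n x ≤ bSeq A T (n+1) x :=
  seq_mono A (fun _ => T) (bSeq A T) (fun _ => hT.1) (fun _ => rfl) (fun _ _ => rfl)
    (fun _ _ => le_rfl)

lemma b_stay [Fintype X] (A K : Set X) (T : X → X → ℝ) (hT : IsTransMat T)
    (hKA : ∀ x ∈ K, x ∉ A) (hK : ∀ x ∈ K, ∀ y, y ∉ K → T x y = 0) (n : ℕ) :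
    ∀ x ∈ K, (n : ℝ) ≤ bSeq A T n x := by
  induction n with
  | zero => intro x _; simpa using (b_props A T hT).1 0 x
  | succ n ih =>
    intro x hx
    have h : ∑ y, T x y * (n : ℝ) ≤ ∑ y, T x y * bSeq A T n y := by
      refine Finset.sum_le_sum fun y _ => ?_
      by_cases hy : y ∈ K
      · exact mul_le_mul_of_nonneg_left (ih y hy) (hT.1 x y)
      · simp [hK x hx y hy]
    rw [← Finset.sum_mul, hT.2] at h
    simp only [bSeq, hKA x hx, if_false]
    push_cast
    linarith

lemma exists_G [Fintype X] (𝒯 : Set (X → X → ℝ))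
    (hmem : ∀ T ∈ 𝒯, IsTransMat T) (hne : 𝒯.Nonempty) (hsep : HasSepRows 𝒯) (A : Set X) :
    ∃ G : Set X, Bad 𝒯 A G ∧ (∀ x, x ∉ A → x ∉ G → ∀ T ∈ 𝒯, ∀ y ∈ G, T x y = 0) ∧
      ∀ K : Set X, K.Nonempty → (∀ x ∈ K, x ∉ A ∪ G) →
      ∀ T ∈ 𝒯, (∀ x ∈ K, ∀ y, y ∉ K → T x y = 0) → False := by
  obtain ⟨T₀, hT₀⟩ := hne
  have hbe : Bad 𝒯 A ∅ := ⟨T₀, hT₀, by simp⟩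
  obtain ⟨G, hG⟩ := (Set.toFinite {G : Set X | Bad 𝒯 A G}).exists_maximal ⟨∅, hbe⟩
  obtain ⟨T, hT, hTG⟩ := hG.prop
  refine ⟨G, hG.prop, ?_, ?_⟩
  · intro x hxA hxG T₁ hT₁ y hy
    by_contra hne
    have hpos : 0 < T₁ x y := lt_of_le_of_ne ((hmem _ hT₁).1 x y) (Ne.symm hne)
    obtain ⟨T₂, hT₂, h1, h2⟩ := merge 𝒯 hsep G T T₁ hT hT₁
    have hbad : Bad 𝒯 A (insert x G) := by
      refine ⟨T₂, hT₂, fun T' hT' hag => ?_⟩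
      have hGt := hTG T' hT' (fun z hz w => by
        rw [hag z (Set.mem_insert_of_mem _ hz), h1 z hz])
      rintro z (rfl | hz)
      · rw [← tendsto_add_atTop_iff_nat 1]
        refine tendsto_atTop_mono (fun n => ?_) ((hGt y hy).const_mul_atTop hpos)
        simp only [bSeq, hxA, if_false]
        have := Finset.single_le_sum (f := fun w => T' z w * bSeq A T' n w)
          (fun w _ => mul_nonneg ((hmem _ hT').1 z w) ((b_props A T' (hmem _ hT')).1 n w))
          (Finset.mem_univ y)
        simp only [hag z (Set.mem_insert _ _) y, h2 z hxG y] at this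
        linarith
      · exact hGt z hz
    exact hxG (hG.le_of_ge hbad (Set.subset_insert x G) (Set.mem_insert x G))
  · intro K hKne hK T₁ hT₁ hcl
    obtain ⟨T₂, hT₂, h1, h2⟩ := merge 𝒯 hsep G T T₁ hT hT₁
    have hbad : Bad 𝒯 A (G ∪ K) := by
      refine ⟨T₂, hT₂, fun T' hT' hag => ?_⟩
      have hGt := hTG T' hT' (fun z hz w => by
        rw [hag z (Or.inl hz), h1 z hz])
      rintro z (hz | hz)
      · exact hGt z hz
      · refine tendsto_atTop_mono (fun n => ?_) tendsto_natCast_atTop_atTop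
        refine b_stay A K T' (hmem _ hT') (fun x hx h => hK x hx (Or.inl h)) ?_ n z hz
        intro x hx y hy
        rw [hag x (Or.inr hx), h2 x (fun h => hK x hx (Or.inr h)), hcl x hx y hy]
    obtain ⟨k, hk⟩ := hKne
    exact hK k hk (Or.inr (hG.le_of_ge hbad Set.subset_union_left (Or.inr hk)))

open Classical in
lemma bdd_off [Fintype X] [Nonempty X] (𝒯 : Set (X → X → ℝ)) (hc : IsCompact 𝒯)
    (hmem : ∀ T ∈ 𝒯, IsTransMat T) (B : Set X)
    (hK : ∀ K : Set X, K.Nonempty → (∀ x ∈ K, x ∉ B) →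
      ∀ T ∈ 𝒯, (∀ x ∈ K, ∀ y, y ∉ K → T x y = 0) → False)
    (v : ℕ → X → ℝ) (Ts : ℕ → X → X → ℝ) (hTs : ∀ n, Ts n ∈ 𝒯)
    (hv0 : ∀ n x, 0 ≤ v n x) (hmono : ∀ n x, v n x ≤ v (n+1) x)
    (hB : ∀ n, ∀ x ∈ B, v n x = 0)
    (hv : ∀ n x, x ∉ B → v n x ≤ 1 + ∑ y, Ts n x y * v n y) :
    ∃ M, ∀ n x, v n x ≤ M := by
  set s : ℕ → ℝ := fun n => ∑ x, v n x with hs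
  have hsm : Monotone s := monotone_nat_of_le_succ fun n => Finset.sum_le_sum fun x _ => hmono n x
  by_cases hb : BddAbove (Set.range s)
  · obtain ⟨M, hM⟩ := hb
    exact ⟨M, fun n x => (Finset.single_le_sum (f := v n) (fun y _ => hv0 n y)
      (Finset.mem_univ x)).trans (hM ⟨n, rfl⟩)⟩
  exfalso
  have hst : Tendsto s atTop atTop := tendsto_atTop_atTop_of_monotone' hsm hb
  obtain ⟨N, hN⟩ := (hst.eventually_gt_atTop 0).exists_forall_of_atTop
  have hcs : IsCompact (stdSimplex ℝ X ×ˢ 𝒯) := (isCompact_stdSimplex ℝ X).prod hc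
  have hmemc : ∀ n, ((fun x => v (n + N) x / s (n + N)), Ts (n + N)) ∈ stdSimplex ℝ X ×ˢ 𝒯 := by
    intro n
    have hp := hN (n + N) (by omega)
    refine ⟨⟨fun x => div_nonneg (hv0 _ _) hp.le, ?_⟩, hTs _⟩
    simp only
    rw [← Finset.sum_div]
    exact div_self hp.ne'
  obtain ⟨⟨u, T⟩, ⟨hu, hT⟩, φ, hφ, hlim⟩ := hcs.tendsto_subseq hmemc
  simp only at hu hT
  have hlu := (continuous_fst.tendsto _).comp hlim
  have hlT := (continuous_snd.tendsto _).comp hlim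
  have hlu' : ∀ x, Tendsto (fun n => v (φ n + N) x / s (φ n + N)) atTop (𝓝 (u x)) :=
    fun x => (tendsto_pi_nhds.1 hlu) x
  have hlT' : ∀ x y, Tendsto (fun n => Ts (φ n + N) x y) atTop (𝓝 (T x y)) :=
    fun x y => tendsto_pi_nhds.1 ((tendsto_pi_nhds.1 hlT) x) y
  have hsinv : Tendsto (fun n => (s (φ n + N))⁻¹) atTop (𝓝 0) :=
    (hst.comp ((tendsto_add_atTop_nat N).comp hφ.tendsto_atTop)).inv_tendsto_atTop
  have hle := max_pr 𝒯 hmem B hK T hT u ?_ ?_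
  · have := hu.2
    have h2 : ∑ x, u x ≤ 0 := Finset.sum_nonpos fun x _ => hle x
    linarith
  · intro x hx
    refine le_of_tendsto (hlu' x) (Eventually.of_forall fun n => ?_)
    simp [hB _ x hx]
  · intro x hx
    have hr : Tendsto (fun n => (s (φ n + N))⁻¹ +
        ∑ y, Ts (φ n + N) x y * (v (φ n + N) y / s (φ n + N))) atTop
        (𝓝 (0 + ∑ y, T x y * u y)) :=
      hsinv.add (tendsto_finsetSum _ fun y _ => (hlT' x y).mul (hlu' y))
    rw [zero_add] at hr
    refine le_of_tendsto_of_tendsto' (hlu' x) hr fun n => ?_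
    have hp := hN (φ n + N) (by omega)
    have := div_le_div_of_nonneg_right (hv (φ n + N) x hx) hp.le
    rw [add_div, Finset.sum_div, one_div] at this
    simpa only [mul_div_assoc] using this

/-- The upper expected hitting time of the imprecise Markov chain is attained by a single
homogeneous (precise) transition matrix compatible with `𝒯`. -/
theorem upper_hitting_time_attained [Fintype X] [Nonempty X]
    (𝒯 : Set (X → X → ℝ))
    (hmem : ∀ T ∈ 𝒯, IsTransMat T) (hne : 𝒯.Nonempty) (hcl : IsClosed 𝒯)
    (hcv : Convex ℝ 𝒯) (hsep : HasSepRows 𝒯) (A : Set X) :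
    ∃ hupStar : X → EReal,
      (∀ x, Tendsto (fun n => hupIter 𝒯 A n x) atTop (𝓝 (hupStar x))) ∧
      ∃ T ∈ 𝒯, ∀ x, Tendsto (fun n => hPrecIter T A n x) atTop (𝓝 (hupStar x)) := by
  classical
  have hc : IsCompact 𝒯 := by
    refine IsCompact.of_isClosed_subset (isCompact_Icc (a := (0 : X → X → ℝ)) (b := 1)) hcl ?_
    intro T hT
    refine ⟨fun x y => (hmem T hT).1 x y, fun x y => ?_⟩
    have := Finset.single_le_sum (f := T x) (fun y _ => (hmem T hT).1 x y) (Finset.mem_univ y)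
    rw [(hmem T hT).2] at this
    exact this
  choose O hO hopt using exists_opt 𝒯 hc hne hsep
  set a := aSeq A O with ha
  have hup : ∀ n x, hupIter 𝒯 A n x = (a n x : EReal) := fun n x => by
    rw [hup_eq 𝒯 A O hO hopt n]
  obtain ⟨ha0, ham⟩ : (∀ n x, 0 ≤ a n x) ∧ ∀ n x, a n x ≤ a (n+1) x :=
    seq_mono A (fun n => O (a n)) a (fun n => (hmem _ (hO _)).1) (fun _ => rfl) (fun _ _ => rfl)
      (fun n x => hopt _ _ (hO _) x)
  have haA : ∀ n, ∀ x ∈ A, a n x = 0 := by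
    intro n x hx
    cases n <;> simp [ha, aSeq, hx]
  have hs : ∀ n x, x ∉ A → a (n+1) x = 1 + ∑ y, O (a n) x y * a n y := by
    intro n x hx
    simp [ha, aSeq, hx]
  obtain ⟨G, ⟨TG, hTG, hTGb⟩, hG1, hG2⟩ := exists_G 𝒯 hmem hne hsep A
  -- replace values on G by 0
  have hrow : ∀ (f g : X → ℝ), (∀ y, y ∉ G → f y = g y) → ∀ x, x ∉ A → x ∉ G → ∀ T ∈ 𝒯,
      ∑ y, T x y * f y = ∑ y, T x y * g y := by
    intro f g hfg x hxA hxG T hT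
    refine Finset.sum_congr rfl fun y _ => ?_
    by_cases hy : y ∈ G
    · simp [hG1 x hxA hxG T hT y hy]
    · rw [hfg y hy]
  obtain ⟨M, hM⟩ := bdd_off 𝒯 hc hmem (A ∪ G) hG2 (fun n x => if x ∈ G then 0 else a n x)
    (fun n => O (a n)) (fun n => hO _)
    (fun n x => by split_ifs; exacts [le_rfl, ha0 n x])
    (fun n x => by split_ifs; exacts [le_rfl, ham n x])
    (fun n x hx => by
      rcases hx with hx | hx
      · simp [haA n x hx]
      · simp [hx])
    (fun n x hx => by
      have hxA : x ∉ A := fun h => hx (Or.inl h)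
      have hxG : x ∉ G := fun h => hx (Or.inr h)
      rw [hrow (fun x => if x ∈ G then 0 else a n x) (a n) (fun y hy => by simp [hy]) x hxA hxG
        _ (hO _), ← hs n x hxA]
      simpa [hxG] using ham n x)
  have hM' : ∀ n x, x ∉ G → a n x ≤ M := fun n x hx => by simpa [hx] using hM n x
  have hamono : ∀ x, Monotone fun n => a n x := fun x => monotone_nat_of_le_succ fun n => ham n x
  have hlimf : ∀ x, ∃ l : ℝ, x ∉ G → Tendsto (fun n => a n x) atTop (𝓝 l) := fun x => by
    by_cases hx : x ∈ G
    · exact ⟨0, fun h => absurd hx h⟩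
    · exact ⟨_, fun _ => tendsto_atTop_ciSup (hamono x)
        ⟨M, by rintro _ ⟨n, rfl⟩; exact hM' n x hx⟩⟩
  choose f hf using hlimf
  have haf : ∀ n x, x ∉ G → a n x ≤ f x := fun n x hx => (hamono x).ge_of_tendsto (hf x hx) n
  set f' : X → ℝ := fun x => if x ∈ G then 0 else f x with hf'
  obtain ⟨T, hT, hT1, hT2⟩ := merge 𝒯 hsep G TG (O f') hTG (hO _)
  have hfle : ∀ x, x ∉ A → x ∉ G → f x ≤ 1 + ∑ y, T x y * f' y := by
    intro x hxA hxG
    refine le_of_tendsto ((tendsto_add_atTop_iff_nat 1).2 (hf x hxG)) (Eventually.of_forall ?_)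
    intro n
    rw [hs n x hxA]
    have h1 := hopt f' _ (hO (a n)) x
    have h2 : ∑ y, O (a n) x y * a n y ≤ ∑ y, O (a n) x y * f' y := by
      refine Finset.sum_le_sum fun y _ => ?_
      by_cases hy : y ∈ G
      · simp [hG1 x hxA hxG _ (hO (a n)) y hy]
      · refine mul_le_mul_of_nonneg_left ?_ ((hmem _ (hO _)).1 x y)
        simpa [hf', hy] using haf n y hy
    simp only [hT2 x hxG]
    linarith
  obtain ⟨hb0, hbm⟩ := b_props A T (hmem T hT)
  have hba : ∀ n x, bSeq A T n x ≤ a n x := by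
    intro n
    induction n with
    | zero => intro x; simp [ha, bSeq, aSeq]
    | succ n ih =>
      intro x
      by_cases hx : x ∈ A
      · simp [ha, bSeq, aSeq, hx]
      · rw [hs n x hx]
        simp only [bSeq, hx, if_false]
        have h1 := hopt (a n) T hT x
        have h2 := Finset.sum_le_sum (fun y (_ : y ∈ Finset.univ) =>
          mul_le_mul_of_nonneg_left (ih y) ((hmem T hT).1 x y))
        linarith
  have hbmono : ∀ x, Monotone fun n => bSeq A T n x := fun x =>
    monotone_nat_of_le_succ fun n => hbm n x
  have hlimg : ∀ x, ∃ l : ℝ, x ∉ G → Tendsto (fun n => bSeq A T n x) atTop (𝓝 l) := fun x => by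
    by_cases hx : x ∈ G
    · exact ⟨0, fun h => absurd hx h⟩
    · exact ⟨_, fun _ => tendsto_atTop_ciSup (hbmono x)
        ⟨M, by rintro _ ⟨n, rfl⟩; exact (hba n x).trans (hM' n x hx)⟩⟩
  choose g hg using hlimg
  set g' : X → ℝ := fun x => if x ∈ G then 0 else g x with hg'
  have hgeq : ∀ x, x ∉ A → x ∉ G → 1 + ∑ y, T x y * g' y ≤ g x := by
    intro x hxA hxG
    have h1 : Tendsto (fun n => 1 + ∑ y, T x y * bSeq A T n y) atTop
        (𝓝 (1 + ∑ y, T x y * g' y)) := by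
      refine tendsto_const_nhds.add (tendsto_finsetSum _ fun y _ => ?_)
      by_cases hy : y ∈ G
      · simp [hG1 x hxA hxG _ hT y hy]
      · simpa [hg', hy] using (hg y hy).const_mul (T x y)
    refine le_of_eq (tendsto_nhds_unique h1 ?_)
    have h2 := (tendsto_add_atTop_iff_nat 1).2 (hg x hxG)
    simpa only [bSeq, hxA, if_false] using h2
  have hgle : ∀ x, x ∉ G → g x ≤ f x := fun x hx =>
    le_of_tendsto_of_tendsto' (hg x hx) (hf x hx) fun n => hba n x
  have hd := max_pr 𝒯 hmem (A ∪ G) hG2 T hT (fun x => f' x - g' x)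
    (fun x hx => by
      by_cases hxG : x ∈ G
      · simp [hf', hg', hxG]
      · have hxA : x ∈ A := hx.resolve_right hxG
        have h1 : f x ≤ 0 := le_of_tendsto (hf x hxG)
          (Eventually.of_forall fun n => (haA n x hxA).le)
        have h2 : 0 ≤ g x := ge_of_tendsto (hg x hxG) (Eventually.of_forall fun n => hb0 n x)
        simp only [hf', hg', hxG, if_false]
        linarith)
    (fun x hx => by
      have hxA : x ∉ A := fun h => hx (Or.inl h)
      have hxG : x ∉ G := fun h => hx (Or.inr h)
      have h1 := hfle x hxA hxG
      have h2 := hgeq x hxA hxG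
      simp only [mul_sub, Finset.sum_sub_distrib]
      have h3 : f' x = f x := by simp [hf', hxG]
      have h4 : g' x = g x := by simp [hg', hxG]
      linarith)
  have hfg : ∀ x, x ∉ G → g x = f x := fun x hx => by
    have := hd x
    simp only [hf', hg', hx, if_false] at this
    linarith [hgle x hx]
  have hinf := hTGb T hT hT1
  refine ⟨fun x => if x ∈ G then ⊤ else (f x : EReal), fun x => ?_, T, hT, fun x => ?_⟩
  · simp only [hup]
    by_cases hx : x ∈ G
    · simp only [hx, if_true]
      exact EReal.tendsto_coe_nhds_top_iff.2 (tendsto_atTop_mono (fun n => hba n x) (hinf x hx))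
    · simp only [hx, if_false]
      exact EReal.tendsto_coe.2 (hf x hx)
  · simp only [hPrec_eq]
    by_cases hx : x ∈ G
    · simp only [hx, if_true]
      exact EReal.tendsto_coe_nhds_top_iff.2 (hinf x hx)
    · simp only [hx, if_false]
      rw [← hfg x hx]
      exact EReal.tendsto_coe.2 (hg x hx)
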